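/- arXiv:2601.09502 — 2 statements merged into one kernel-verified Lean document; each statement's English description precedes it below -/
import Mathlib

section
/- Fix x₀ ∈ ℝ³ and set m(x) = x − x₀. Let μ : ℝ³ → Matrix (Fin 3) (Fin 3) ℝ be differentiable at a point x ∈ ℝ³, with μ(y) symmetric and positive definite for every y ∈ ℝ³, and let η > 0. If the symmetric matrix μ(x) + (fderiv ℝ μ x)(m(x)) − η • μ(x) is positive semidefinite, then the matrix μ(x)⁻¹ − (fderiv ℝ (fun y ↦ (μ y)⁻¹) x)(m(x)) − η • μ(x)⁻¹ is also positive semidefinite. -/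
open Matrix

attribute [local instance] Matrix.normedAddCommGroup Matrix.normedSpace

section InverseDerivative

open scoped Ring

variable {𝕜 E R : Type*} [NontriviallyNormedField 𝕜] [NormedAddCommGroup E] [NormedSpace 𝕜 E]

theorem fderiv_fun_ringInverse_apply [NormedRing R] [HasSummableGeomSeries R] [NormedAlgebra 𝕜 R]
    {f : E → R} {x : E} (hf : DifferentiableAt 𝕜 f x) (hx : IsUnit (f x)) (v : E) :
    fderiv 𝕜 (fun y => (f y)⁻¹ʳ) x v = -((f x)⁻¹ʳ * fderiv 𝕜 f x v * (f x)⁻¹ʳ) := by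
  obtain ⟨u, hu⟩ := hx
  have hinv : HasFDerivAt Ring.inverse
      (-ContinuousLinearMap.mulLeftRight 𝕜 R ↑u⁻¹ ↑u⁻¹) (f x) :=
    hu ▸ hasFDerivAt_ringInverse u
  have hcomp := hinv.comp x hf.hasFDerivAt
  rw [← hu, Ring.inverse_unit]
  exact DFunLike.congr_fun hcomp.fderiv v

theorem fderiv_fun_matrix_inv_apply {n : Type*} [Fintype n] [DecidableEq n]
    [NormedCommRing R] [CompleteSpace R] [NormedAlgebra 𝕜 R]
    {μ : E → Matrix n n R} {x : E} (hμ : DifferentiableAt 𝕜 μ x) (hx : IsUnit (μ x)) (v : E) :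
    fderiv 𝕜 (fun y => (μ y)⁻¹) x v = -((μ x)⁻¹ * fderiv 𝕜 μ x v * (μ x)⁻¹) := by
  -- The entrywise sup norm is not submultiplicative; the `L∞` operator norm is, and since it
  -- induces the same topology it gives the same Fréchet derivatives.
  let : NormedRing (Matrix n n R) := Matrix.linftyOpNormedRing
  let : NormedAlgebra 𝕜 (Matrix n n R) := Matrix.linftyOpNormedAlgebra
  have : @CompleteSpace (Matrix n n R) PseudoMetricSpace.toUniformSpace :=
    inferInstanceAs (CompleteSpace (n → n → R))
  simp only [Matrix.nonsing_inv_eq_ringInverse]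
  exact fderiv_fun_ringInverse_apply hμ hx v

end InverseDerivative

theorem posSemidef_inv_mul_mul_inv_iff {n R : Type*} [Fintype n] [DecidableEq n]
    [CommRing R] [PartialOrder R] [StarRing R] {A M : Matrix n n R}
    (hA : A.IsHermitian) (hunit : IsUnit A) :
    (A⁻¹ * M * A⁻¹).PosSemidef ↔ M.PosSemidef := by
  have hstar : star A⁻¹ = A⁻¹ := hA.inv
  simpa only [hstar] using
    (Matrix.isUnit_nonsing_inv_iff.mpr hunit).posSemidef_star_left_conjugate_iff (x := M)

open scoped ComplexOrder in
theorem stmt_1_general {E n 𝕜 : Type*} [NormedAddCommGroup E] [NormedSpace ℝ E]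
    [Fintype n] [DecidableEq n] [RCLike 𝕜] {μ : E → Matrix n n 𝕜} {x : E}
    (hdiff : DifferentiableAt ℝ μ x) (hherm : (μ x).IsHermitian) (hunit : IsUnit (μ x))
    (v : E) (η : ℝ) :
    ((μ x)⁻¹ - fderiv ℝ (fun y => (μ y)⁻¹) x v - η • (μ x)⁻¹).PosSemidef ↔
      (μ x + fderiv ℝ μ x v - η • μ x).PosSemidef := by
  have hinv : (μ x)⁻¹ * μ x = 1 :=
    Matrix.nonsing_inv_mul _ ((Matrix.isUnit_iff_isUnit_det _).mp hunit)
  have hcongr : (μ x)⁻¹ - fderiv ℝ (fun y => (μ y)⁻¹) x v - η • (μ x)⁻¹ =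
      (μ x)⁻¹ * (μ x + fderiv ℝ μ x v - η • μ x) * (μ x)⁻¹ := by
    rw [fderiv_fun_matrix_inv_apply hdiff hunit]
    simp only [mul_sub, mul_add, sub_mul, add_mul, mul_smul_comm, smul_mul_assoc, hinv, one_mul,
      sub_neg_eq_add]
  rw [hcongr, posSemidef_inv_mul_mul_inv_iff hherm hunit]

/-- The pointwise non-trapping condition `μ + (m·∇)μ ≥ η μ` implies
`μ⁻¹ − (m·∇)μ⁻¹ ≥ η μ⁻¹`. -/
theorem stmt_1 (x₀ x : Fin 3 → ℝ)
    (μ : (Fin 3 → ℝ) → Matrix (Fin 3) (Fin 3) ℝ)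
    (hdiff : DifferentiableAt ℝ μ x)
    (hsymm : ∀ y, (μ y).IsSymm) (hpos : ∀ y, (μ y).PosDef)
    (η : ℝ) (hη : 0 < η)
    (h : (μ x + fderiv ℝ μ x (x - x₀) - η • μ x).PosSemidef) :
    ((μ x)⁻¹ - fderiv ℝ (fun y => (μ y)⁻¹) x (x - x₀) - η • (μ x)⁻¹).PosSemidef :=
  (stmt_1_general hdiff (hpos x).isHermitian (hpos x).isUnit (x - x₀) η).mpr h
end

section
/- Let ε, σ : ℝ³ → ℝ be continuously differentiable with ε(x) ≠ 0 for all x ∈ ℝ³, and let E, H : ℝ × ℝ³ → ℝ³ be twice continuously differentiable. Assume that for all (t, x) ∈ ℝ × ℝ³, ∂ₜ(ε(x) • E(t,x)) = curl (H(t, ·)) (x) − σ(x) • E(t,x). Define ρ(t,x) := div (fun y ↦ ε(y) • E(t,y)) (x). Then for all (t, x) ∈ ℝ × ℝ³, ∂ₜρ(t,x) = −(σ(x)/ε(x)) · ρ(t,x) − ∇(σ/ε)(x) · (ε(x) • E(t,x)). -/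
open Matrix

/-- Divergence of a vector field on ℝ³. -/
noncomputable def vdiv (F : (Fin 3 → ℝ) → (Fin 3 → ℝ)) (x : Fin 3 → ℝ) : ℝ :=
  fderiv ℝ F x (Pi.single 0 1) 0 + fderiv ℝ F x (Pi.single 1 1) 1 +
    fderiv ℝ F x (Pi.single 2 1) 2

/-- Curl of a vector field on ℝ³. -/
noncomputable def vcurl (F : (Fin 3 → ℝ) → (Fin 3 → ℝ)) (x : Fin 3 → ℝ) : Fin 3 → ℝ :=
  ![fderiv ℝ F x (Pi.single 1 1) 2 - fderiv ℝ F x (Pi.single 2 1) 1,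
    fderiv ℝ F x (Pi.single 2 1) 0 - fderiv ℝ F x (Pi.single 0 1) 2,
    fderiv ℝ F x (Pi.single 0 1) 1 - fderiv ℝ F x (Pi.single 1 1) 0]

/-- Gradient of a scalar function on ℝ³. -/
noncomputable def vgrad (f : (Fin 3 → ℝ) → ℝ) (x : Fin 3 → ℝ) : Fin 3 → ℝ :=
  fun i => fderiv ℝ f x (Pi.single i 1)

open scoped Topology

/-!
The divergence of a curl vanishes, so taking the divergence of Ampère's law and exchanging it with
`∂ₜ` gives Gauss's law `∂ₜ div(εE) = −div(σE)`. Writing `σE = (σ/ε)(εE)` and applying the product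
rule for the divergence turns the right-hand side into `−(σ/ε)ρ − ∇(σ/ε)·(εE)`.
-/

section Slices

variable {𝕜 V W : Type*} [NontriviallyNormedField 𝕜] [NormedAddCommGroup V] [NormedSpace 𝕜 V]
  [NormedAddCommGroup W] [NormedSpace 𝕜 W] {G : 𝕜 × V → W} {t : 𝕜} {x : V}

theorem hasFDerivAt_slice_right {U : Type*} [NormedAddCommGroup U] [NormedSpace 𝕜 U]
    {G : U × V → W} {u : U} (hG : DifferentiableAt 𝕜 G (u, x)) :
    HasFDerivAt (fun y => G (u, y)) (fderiv 𝕜 G (u, x) ∘L .inr 𝕜 U V) x :=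
  hG.hasFDerivAt.comp x (hasFDerivAt_prodMk_right u x)

theorem hasDerivAt_slice_left (hG : DifferentiableAt 𝕜 G (t, x)) :
    HasDerivAt (fun s => G (s, x)) (fderiv 𝕜 G (t, x) (1, 0)) t :=
  hG.hasFDerivAt.comp_hasDerivAt t ((hasDerivAt_id t).prodMk (hasDerivAt_const t x))

theorem differentiableAt_fderiv_of_contDiffAt {F : V → W} (hF : ContDiffAt 𝕜 2 F x) :
    DifferentiableAt 𝕜 (fderiv 𝕜 F) x :=
  (hF.fderiv_right (m := 1) (by norm_num)).differentiableAt one_ne_zero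

theorem eventually_differentiableAt_of_contDiffAt {F : V → W} (hF : ContDiffAt 𝕜 1 F x) :
    ∀ᶠ y in 𝓝 x, DifferentiableAt 𝕜 F y :=
  (hF.eventually (by simp)).mono fun _ h => h.differentiableAt one_ne_zero

theorem hasFDerivAt_deriv_slice_left (hG : ContDiffAt 𝕜 2 G (t, x)) :
    HasFDerivAt (fun y => deriv (fun s => G (s, y)) t)
      ((fderiv 𝕜 (fderiv 𝕜 G) (t, x)).flip (1, 0) ∘L .inr 𝕜 𝕜 V) x := by
  have h_fderiv : HasFDerivAt (fun y => fderiv 𝕜 G (t, y) (1, 0))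
      ((fderiv 𝕜 (fderiv 𝕜 G) (t, x)).flip (1, 0) ∘L .inr 𝕜 𝕜 V) x := by
    have h := (hasFDerivAt_slice_right (differentiableAt_fderiv_of_contDiffAt hG)).clm_apply
      (hasFDerivAt_const ((1, 0) : 𝕜 × V) x)
    convert h using 1
    ext v
    simp
  have h_near : ∀ᶠ y in 𝓝 x, DifferentiableAt 𝕜 G (t, y) :=
    (Continuous.prodMk_right t).continuousAt.eventually
      (eventually_differentiableAt_of_contDiffAt (hG.of_le one_le_two))
  exact h_fderiv.congr_of_eventuallyEq
    (h_near.mono fun y hy => (hasDerivAt_slice_left hy).deriv)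

end Slices

theorem hasDerivAt_fderiv_slice_right {𝕜 V W : Type*} [RCLike 𝕜] [NormedAddCommGroup V]
    [NormedSpace 𝕜 V] [NormedAddCommGroup W] [NormedSpace 𝕜 W] {G : 𝕜 × V → W} {t : 𝕜} {x : V}
    (hG : ContDiffAt 𝕜 2 G (t, x)) :
    HasDerivAt (fun s => fderiv 𝕜 (fun y => G (s, y)) x)
      (fderiv 𝕜 (fun y => deriv (fun s => G (s, y)) t) x) t := by
  have h_fderiv : HasDerivAt (fun s => fderiv 𝕜 G (s, x) ∘L .inr 𝕜 𝕜 V)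
      (fderiv 𝕜 (fderiv 𝕜 G) (t, x) (1, 0) ∘L .inr 𝕜 𝕜 V) t := by
    simpa using (hasDerivAt_slice_left (differentiableAt_fderiv_of_contDiffAt hG)).clm_comp
      (hasDerivAt_const t (ContinuousLinearMap.inr 𝕜 𝕜 V))
  have h_near : ∀ᶠ s in 𝓝 t, DifferentiableAt 𝕜 G (s, x) :=
    (Continuous.prodMk_left x).continuousAt.eventually
      (eventually_differentiableAt_of_contDiffAt (hG.of_le one_le_two))
  have h_symm : fderiv 𝕜 (fderiv 𝕜 G) (t, x) (1, 0) ∘L .inr 𝕜 𝕜 V =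
      (fderiv 𝕜 (fderiv 𝕜 G) (t, x)).flip (1, 0) ∘L .inr 𝕜 𝕜 V :=
    ContinuousLinearMap.ext fun v => hG.isSymmSndFDerivAt (by simp) (1, 0) (0, v)
  rw [(hasFDerivAt_deriv_slice_left hG).fderiv, ← h_symm]
  exact h_fderiv.congr_of_eventuallyEq
    (h_near.mono fun s hs => (hasFDerivAt_slice_right hs).fderiv)

section VectorCalculus

variable {F G : (Fin 3 → ℝ) → (Fin 3 → ℝ)} {x : Fin 3 → ℝ}

theorem vdiv_eq_sum : vdiv F x = ∑ i, fderiv ℝ F x (Pi.single i 1) i :=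
  (Fin.sum_univ_three fun i => fderiv ℝ F x (Pi.single i 1) i).symm

theorem vdiv_congr (h : F =ᶠ[𝓝 x] G) : vdiv F x = vdiv G x := by
  simp only [vdiv, h.fderiv_eq]

theorem vdiv_sub (hF : DifferentiableAt ℝ F x) (hG : DifferentiableAt ℝ G x) :
    vdiv (fun y => F y - G y) x = vdiv F x - vdiv G x := by
  simp only [vdiv_eq_sum, fderiv_fun_sub hF hG, _root_.sub_apply, Pi.sub_apply,
    Finset.sum_sub_distrib]

theorem vdiv_smul {f : (Fin 3 → ℝ) → ℝ} (hf : DifferentiableAt ℝ f x)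
    (hF : DifferentiableAt ℝ F x) :
    vdiv (fun y => f y • F y) x = f x * vdiv F x + vgrad f x ⬝ᵥ F x := by
  simp [vdiv_eq_sum, vgrad, dotProduct, fderiv_fun_smul hf hF, Finset.sum_add_distrib,
    Finset.mul_sum]

theorem vdiv_smul_eq_div_mul_add {ε σ : (Fin 3 → ℝ) → ℝ} (hε : DifferentiableAt ℝ ε x)
    (hσ : DifferentiableAt ℝ σ x) (hF : DifferentiableAt ℝ F x) (hε0 : ε x ≠ 0) :
    vdiv (fun y => σ y • F y) x =
      σ x / ε x * vdiv (fun y => ε y • F y) x + vgrad (fun y => σ y / ε y) x ⬝ᵥ (ε x • F x) := by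
  have h_factor : (fun y => σ y • F y) =ᶠ[𝓝 x] fun y => (σ y / ε y) • (ε y • F y) := by
    filter_upwards [hε.continuousAt.eventually_ne hε0] with y hy
    rw [smul_smul, div_mul_cancel₀ _ hy]
  have h_quot : DifferentiableAt ℝ (fun y => σ y / ε y) x := by
    fun_prop (disch := exact hε0)
  rw [vdiv_congr h_factor, vdiv_smul h_quot (hε.fun_smul hF)]

/-- The linear map underlying the curl, sending a Jacobian to the vector of its antisymmetric part:
`vcurl F x = curlOfJacobian (fderiv ℝ F x)`. Being a fixed continuous linear map, it commutes
with differentiation. -/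
noncomputable def curlOfJacobian : ((Fin 3 → ℝ) →L[ℝ] (Fin 3 → ℝ)) →L[ℝ] (Fin 3 → ℝ) :=
  LinearMap.toContinuousLinearMap
    { toFun A := ![A (Pi.single 1 1) 2 - A (Pi.single 2 1) 1,
        A (Pi.single 2 1) 0 - A (Pi.single 0 1) 2,
        A (Pi.single 0 1) 1 - A (Pi.single 1 1) 0]
      map_add' A B := by ext i; fin_cases i <;> simp <;> ring
      map_smul' c A := by ext i; fin_cases i <;> simp <;> ring }

theorem hasFDerivAt_vcurl (hF : DifferentiableAt ℝ (fderiv ℝ F) x) :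
    HasFDerivAt (vcurl F) (curlOfJacobian ∘L fderiv ℝ (fderiv ℝ F) x) x :=
  curlOfJacobian.hasFDerivAt.comp x hF.hasFDerivAt

theorem vdiv_vcurl (hF : ContDiffAt ℝ 2 F x) : vdiv (vcurl F) x = 0 := by
  have h_symm : IsSymmSndFDerivAt ℝ F x := hF.isSymmSndFDerivAt (by simp)
  rw [vdiv, (hasFDerivAt_vcurl (differentiableAt_fderiv_of_contDiffAt hF)).fderiv]
  simp only [curlOfJacobian, ContinuousLinearMap.comp_apply, LinearMap.coe_toContinuousLinearMap',
    LinearMap.coe_mk, AddHom.coe_mk, cons_val]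
  rw [h_symm (Pi.single 1 1) (Pi.single 0 1), h_symm (Pi.single 2 1) (Pi.single 0 1),
    h_symm (Pi.single 2 1) (Pi.single 1 1)]
  ring

end VectorCalculus

section ChargeDensity

variable {ε σ : (Fin 3 → ℝ) → ℝ} {E : ℝ × (Fin 3 → ℝ) → (Fin 3 → ℝ)}
  {H : (Fin 3 → ℝ) → (Fin 3 → ℝ)} {t : ℝ} {x : Fin 3 → ℝ}

theorem hasDerivAt_vdiv_slice_right (hE : ContDiffAt ℝ 2 E (t, x)) :
    HasDerivAt (fun τ => vdiv (fun y => E (τ, y)) x)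
      (vdiv (fun y => deriv (fun τ => E (τ, y)) t) x) t := by
  have h_entry (i : Fin 3) := hasDerivAt_pi.1
    ((hasDerivAt_fderiv_slice_right hE).clm_apply (hasDerivAt_const t (Pi.single i 1))) i
  simpa [vdiv_eq_sum] using HasDerivAt.fun_sum fun i (_ : i ∈ Finset.univ) => h_entry i

-- `ε • E` need not be `C²`, so the derivatives are only exchanged on `E`, via the product rule.
theorem hasDerivAt_vdiv_smul_slice_right (hε : DifferentiableAt ℝ ε x)
    (hE : ContDiffAt ℝ 2 E (t, x)) :
    HasDerivAt (fun τ => vdiv (fun y => ε y • E (τ, y)) x)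
      (vdiv (fun y => deriv (fun τ => ε y • E (τ, y)) t) x) t := by
  have h_near : ∀ᶠ τ in 𝓝 t, DifferentiableAt ℝ E (τ, x) :=
    (Continuous.prodMk_left x).continuousAt.eventually
      (eventually_differentiableAt_of_contDiffAt (hE.of_le one_le_two))
  have h_product : (fun τ => vdiv (fun y => ε y • E (τ, y)) x) =ᶠ[𝓝 t]
      fun τ => ε x * vdiv (fun y => E (τ, y)) x + vgrad ε x ⬝ᵥ E (τ, x) :=
    h_near.mono fun τ hτ => vdiv_smul hε (hasFDerivAt_slice_right hτ).differentiableAt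
  have h_grad : HasDerivAt (fun τ => vgrad ε x ⬝ᵥ E (τ, x))
      (vgrad ε x ⬝ᵥ deriv (fun τ => E (τ, x)) t) t :=
    HasDerivAt.fun_sum fun i _ => (hasDerivAt_pi.1
      (hasDerivAt_slice_left h_near.self_of_nhds).differentiableAt.hasDerivAt i).const_mul _
  simp only [deriv_fun_const_smul_field]
  rw [vdiv_smul hε (hasFDerivAt_deriv_slice_left hE).differentiableAt]
  exact (((hasDerivAt_vdiv_slice_right hE).const_mul (ε x)).add h_grad).congr_of_eventuallyEq
    h_product

theorem hasDerivAt_vdiv_smul_of_ampere (hε : DifferentiableAt ℝ ε x) (hσ : DifferentiableAt ℝ σ x)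
    (hE : ContDiffAt ℝ 2 E (t, x)) (hH : ContDiffAt ℝ 2 H x)
    (ampere : ∀ᶠ y in 𝓝 x, deriv (fun τ => ε y • E (τ, y)) t = vcurl H y - σ y • E (t, y)) :
    HasDerivAt (fun τ => vdiv (fun y => ε y • E (τ, y)) x)
      (-vdiv (fun y => σ y • E (t, y)) x) t := by
  have hEx : DifferentiableAt ℝ (fun y => E (t, y)) x :=
    (hasFDerivAt_slice_right (hE.differentiableAt two_ne_zero)).differentiableAt
  have h_curl : DifferentiableAt ℝ (vcurl H) x :=
    (hasFDerivAt_vcurl (differentiableAt_fderiv_of_contDiffAt hH)).differentiableAt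
  have h_div := hasDerivAt_vdiv_smul_slice_right hε hE
  rwa [vdiv_congr ampere, vdiv_sub h_curl (hσ.fun_smul hEx), vdiv_vcurl hH, zero_sub] at h_div

theorem stmt_9_general (hε : DifferentiableAt ℝ ε x) (hσ : DifferentiableAt ℝ σ x)
    (hε0 : ε x ≠ 0) (hE : ContDiffAt ℝ 2 E (t, x)) (hH : ContDiffAt ℝ 2 H x)
    (ampere : ∀ᶠ y in 𝓝 x, deriv (fun τ => ε y • E (τ, y)) t = vcurl H y - σ y • E (t, y)) :
    HasDerivAt (fun τ => vdiv (fun y => ε y • E (τ, y)) x)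
      (-(σ x / ε x) * vdiv (fun y => ε y • E (t, y)) x
        - vgrad (fun y => σ y / ε y) x ⬝ᵥ (ε x • E (t, x))) t := by
  have hEx : DifferentiableAt ℝ (fun y => E (t, y)) x :=
    (hasFDerivAt_slice_right (hE.differentiableAt two_ne_zero)).differentiableAt
  convert hasDerivAt_vdiv_smul_of_ampere hε hσ hE hH ampere using 1
  rw [vdiv_smul_eq_div_mul_add hε hσ hEx hε0]
  ring

end ChargeDensity

/-- Scalar ODE for the charge density `ρ = div(εE)` in the isotropic case:
`∂ₜρ = −(σ/ε) ρ − ∇(σ/ε) · (εE)`. -/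
theorem stmt_9 (ε σ : (Fin 3 → ℝ) → ℝ)
    (hε : ContDiff ℝ 1 ε) (hσ : ContDiff ℝ 1 σ)
    (hε0 : ∀ x, ε x ≠ 0)
    (E H : ℝ × (Fin 3 → ℝ) → (Fin 3 → ℝ))
    (hE : ContDiff ℝ 2 E) (hH : ContDiff ℝ 2 H)
    (ampere : ∀ t x, deriv (fun τ => ε x • E (τ, x)) t =
      vcurl (fun y => H (t, y)) x - σ x • E (t, x))
    (ρ : ℝ → (Fin 3 → ℝ) → ℝ)
    (hρ : ∀ t x, ρ t x = vdiv (fun y => ε y • E (t, y)) x) :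
    ∀ t x, deriv (fun τ => ρ τ x) t =
      -(σ x / ε x) * ρ t x
        - vgrad (fun y => σ y / ε y) x ⬝ᵥ (ε x • E (t, x)) := by
  intro t x
  simp only [hρ]
  exact (stmt_9_general (hε.differentiable one_ne_zero x) (hσ.differentiable one_ne_zero x)
    (hε0 x) hE.contDiffAt (by fun_prop) (.of_forall (ampere t))).deriv
end
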